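/- Core of the InterMac security theorem: let the augmented source packets v_{i,j} ∈ F^{n+m} be as given, let Π = span of all v_{i,j}, and let W = Π_{M_1}^⊥ = {z ∈ F^{n+m} : v_{i,j} · z = 0 for all i ≠ 1, j}. For any y* ∈ F^{n+m} with y* ∉ Π and any values t_1, …, t_g ∈ F and t* ∈ F, the set {k ∈ W : v_{1,j} · k = t_j for all j ∈ Fin g, and y* · k = t*} has exactly q^{n−1} elements; in particular its cardinality does not depend on t*, so when the hidden key k_1 is uniform on the set of keys in W consistent with the observed tags, every candidate tag t* for the corrupted packet y* is equally likely. -/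

import Mathlib

theorem srcIdx_lt {s g : ℕ} (i : Fin s) (j : Fin g) : g * i.1 + j.1 < s * g := by
  have hi := i.2; have hj := j.2
  calc g * i.1 + j.1 < g * (i.1 + 1) := by rw [Nat.mul_add, Nat.mul_one]; omega
    _ ≤ g * s := Nat.mul_le_mul_left g hi
    _ = s * g := Nat.mul_comm g s

/-- The index `g·i + j` of the augmentation coordinate of the source packet `v_{i,j}`. -/
def srcIdx {s g : ℕ} (i : Fin s) (j : Fin g) : Fin (s * g) :=
  ⟨g * i.1 + j.1, srcIdx_lt i j⟩

/-- The augmented source packet `v_{i,j} = (v̂_{i,j}, e_{g·i+j}) ∈ F^{n+m}`, `m = s·g`. -/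
def pkt {q s g n : ℕ} (vhat : Fin s → Fin g → Fin n → ZMod q)
    (i : Fin s) (j : Fin g) : Fin (n + s * g) → ZMod q :=
  Fin.append (vhat i j) (Pi.single (srcIdx i j) 1)

/-! Put `y*` together with the source packets. The augmentation makes the packets linearly
independent, and `y* ∉ Π` keeps the enlarged family independent. A matrix with independent rows
acts surjectively, so the keys with prescribed tags form a coset of its kernel, whose dimension
is `(n + m) - (m + 1) = n - 1` by rank–nullity. -/

open Module Matrix

theorem ncard_preimage_singleton_of_surjective {K V W : Type*} [DivisionRing K]
    [AddCommGroup V] [Module K V] [Module.Finite K V] [AddCommGroup W] [Module K W]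
    {f : V →ₗ[K] W} (hf : Function.Surjective f) (c : W) :
    (f ⁻¹' {c}).ncard = Nat.card K ^ (finrank K V - finrank K W) := by
  have rank_nullity : finrank K V - finrank K W = finrank K f.ker := by
    rw [← f.finrank_range_add_finrank_ker, LinearMap.range_eq_top.2 hf,
      finrank_top, Nat.add_sub_cancel_left]
  calc
    (f ⁻¹' {c}).ncard = Nat.card f.ker :=
      Nat.card_congr (f.toAddMonoidHom.fiberEquivKerOfSurjective hf c)
    _ = Nat.card K ^ (finrank K V - finrank K W) := by
      rw [natCard_eq_pow_finrank (K := K), rank_nullity]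

section IndependentRows

variable {K ι κ : Type*} [Field K] [Fintype κ]

theorem mulVecLin_surjective_of_linearIndependent_row [Finite ι] {A : Matrix ι κ K}
    (hA : LinearIndependent K A.row) : Function.Surjective A.mulVecLin := by
  have := Fintype.ofFinite ι
  exact LinearMap.range_eq_top.1 <| Submodule.eq_top_of_finrank_eq <|
    hA.rank_matrix.trans (finrank_fintype_fun_eq_card K).symm

variable [Fintype ι]

theorem ncard_setOf_forall_dotProduct_eq {v : ι → κ → K} (hv : LinearIndependent K v)
    (c : ι → K) :
    {k : κ → K | ∀ i, v i ⬝ᵥ k = c i}.ncard =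
      Nat.card K ^ (Fintype.card κ - Fintype.card ι) := by
  have solutions_eq_fiber :
      {k : κ → K | ∀ i, v i ⬝ᵥ k = c i} = (Matrix.of v).mulVecLin ⁻¹' {c} := by
    ext k
    exact funext_iff.symm
  rw [solutions_eq_fiber, ncard_preimage_singleton_of_surjective
    (mulVecLin_surjective_of_linearIndependent_row (A := Matrix.of v) hv),
    finrank_fintype_fun_eq_card, finrank_fintype_fun_eq_card]

theorem ncard_setOf_forall_dotProduct_eq_and_dotProduct_eq {v : ι → κ → K}
    (hv : LinearIndependent K v) {y : κ → K} (hy : y ∉ Submodule.span K (Set.range v))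
    (c : ι → K) (b : K) :
    {k : κ → K | (∀ i, v i ⬝ᵥ k = c i) ∧ y ⬝ᵥ k = b}.ncard =
      Nat.card K ^ (Fintype.card κ - Fintype.card ι - 1) := by
  have h := ncard_setOf_forall_dotProduct_eq (hv.option hy) (fun o ↦ o.casesOn' b c)
  simpa only [Option.forall, Option.casesOn'_none, Option.casesOn'_some, and_comm,
    Fintype.card_option, Nat.sub_add_eq] using h

end IndependentRows

theorem linearIndependent_append_single {R ι : Type*} [Semiring R] {n m : ℕ}
    (a : ι → Fin n → R) {e : ι → Fin m} (he : Function.Injective e) :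
    LinearIndependent R fun i ↦ (Fin.append (a i) (Pi.single (e i) 1) : Fin (n + m) → R) := by
  refine LinearIndependent.of_comp (LinearMap.funLeft R R (Fin.natAdd n)) ?_
  convert (Pi.linearIndependent_single_one (Fin m) R).comp e he using 1
  ext i r
  simp [LinearMap.funLeft_apply]

theorem srcIdx_eq_finProdFinEquiv {s g : ℕ} (i : Fin s) (j : Fin g) :
    srcIdx i j = finProdFinEquiv (i, j) :=
  Fin.ext (Nat.add_comm _ _)

theorem linearIndependent_pkt {q s g n : ℕ} (vhat : Fin s → Fin g → Fin n → ZMod q) :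
    LinearIndependent (ZMod q) fun p : Fin s × Fin g ↦ pkt vhat p.1 p.2 := by
  refine linearIndependent_append_single (fun p : Fin s × Fin g ↦ vhat p.1 p.2) ?_
  simpa only [srcIdx_eq_finProdFinEquiv] using finProdFinEquiv.injective

theorem forall_eq_single_iff {σ γ M : Type*} [DecidableEq σ] [Zero M] (x : σ → γ → M) (i₀ : σ)
    (t : γ → M) :
    (∀ p : σ × γ, x p.1 p.2 = (Pi.single i₀ t : σ → γ → M) p.1 p.2) ↔
      (∀ i, i ≠ i₀ → ∀ j, x i j = 0) ∧ ∀ j, x i₀ j = t j := by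
  constructor
  · intro h
    exact ⟨fun i hi j ↦ by simpa [hi] using h (i, j), fun j ↦ by simpa using h (i₀, j)⟩
  · rintro ⟨hzero, ht⟩ ⟨i, j⟩
    obtain rfl | hi := eq_or_ne i i₀
    · simpa using ht j
    · simpa [hi] using hzero i hi j

theorem intermac_security_core_general {K σ γ κ : Type*} [Field K] [Finite K]
    [Fintype σ] [Fintype γ] [Fintype κ] {v : σ → γ → κ → K}
    (hv : LinearIndependent K fun p : σ × γ ↦ v p.1 p.2) {y : κ → K}
    (hy : y ∉ Submodule.span K (Set.range fun p : σ × γ ↦ v p.1 p.2))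
    (i₀ : σ) (t : γ → K) (b : K) :
    {k : κ → K | (∀ i, i ≠ i₀ → ∀ j, v i j ⬝ᵥ k = 0) ∧ (∀ j, v i₀ j ⬝ᵥ k = t j) ∧
        y ⬝ᵥ k = b}.ncard =
      Nat.card K ^ (Fintype.card κ - Fintype.card σ * Fintype.card γ - 1) := by
  classical
  have h := ncard_setOf_forall_dotProduct_eq_and_dotProduct_eq hv hy
    (fun p ↦ (Pi.single i₀ t : σ → γ → K) p.1 p.2) b
  have tags_iff (k : κ → K) := forall_eq_single_iff (fun i j ↦ v i j ⬝ᵥ k) i₀ t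
  simpa only [tags_iff, and_assoc, Fintype.card_prod] using h

/-- core of the InterMac security theorem.  With
`W = Π_{M_1}^⊥ = {z : v_{i,j} · z = 0 for all i ≠ 1, j}` (source 1 is index `0`),
for any `y* ∉ Π = span{v_{i,j}}` and any `t_1, …, t_g, t*`, the set of keys
`k ∈ W` with `v_{1,j} · k = t_j` for all `j` and `y* · k = t*` has exactly
`q^(n−1)` elements; in particular its cardinality does not depend on `t*`. -/
theorem intermac_security_core
    (q s g n : ℕ) (hq : q.Prime) (hs : 0 < s) (hg : 0 < g) (hn : 0 < n)
    (vhat : Fin s → Fin g → Fin n → ZMod q)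
    (ystar : Fin (n + s * g) → ZMod q)
    (hy : ystar ∉ Submodule.span (ZMod q)
      (Set.range fun p : Fin s × Fin g => pkt vhat p.1 p.2))
    (t : Fin g → ZMod q) (tstar : ZMod q) :
    Set.ncard {k : Fin (n + s * g) → ZMod q |
        (∀ i : Fin s, i ≠ (⟨0, hs⟩ : Fin s) → ∀ j : Fin g,
          (∑ r : Fin (n + s * g), pkt vhat i j r * k r) = 0) ∧
        (∀ j : Fin g,
          (∑ r : Fin (n + s * g), pkt vhat (⟨0, hs⟩ : Fin s) j r * k r) = t j) ∧
        (∑ r : Fin (n + s * g), ystar r * k r) = tstar}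
      = q ^ (n - 1) := by
  have : Fact q.Prime := ⟨hq⟩
  simpa [dotProduct] using
    intermac_security_core_general (linearIndependent_pkt vhat) hy ⟨0, hs⟩ t tstar
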